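/- Let Φ : [0,∞) → [0,∞) be a convex Young function of class Δ₂ (i.e. Φ(x)/x → ∞ and limsup Φ(2x)/Φ(x) < ∞) whose conjugate Ψ(y) = sup_{x≥0}(xy - Φ(x)) is also of class Δ₂. Let (Z_t)_{t∈ℕ} be a non-negative submartingale converging a.s. and in L¹ to Z_∞ with E Φ(Z_∞) < ∞. Then E Φ(Δ · sup_n Z_n) < ∞ for every Δ > 0. -/

import Mathlib

/-! The conjugate's `Δ₂` condition makes `Φ` grow strictly faster than linearly in a geometric sense:
`Φ (a x) ≥ 2 a Φ x` for some `a ≥ 2` and all large `x` (`nabla_two_of_conjugate_delta_two`), so that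
`Φ x / x` at least doubles from each point of the grid `xₖ = x₁ aᵏ` to the next.

With `M = sup Z`, Doob's maximal inequality gives `x P(M > 2x) ≤ E[Z∞; Z∞ ≥ x]`
(`maximal_ineq_truncated`). Cutting the values of `M` along the grid and using `Δ₂` to absorb the
factors `Δ` and `a`,
`E Φ(Δ M) ≤ const + C ∑ₖ Φ(xₖ) P(M > 2xₖ) ≤ const + C E[Z∞ ∑_{xₖ ≤ Z∞} Φ(xₖ) / xₖ]`.
The last sum is dominated by twice its largest term, hence by `2 Φ(Z∞) / Z∞` (`sum_grid_le`), and
the right-hand side is at most `const + 2 C E Φ(Z∞)`. As the truncated maximal inequality involves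
`Z∞` alone on the right, no a priori finiteness of `E Φ(M)` is required. -/

open MeasureTheory ProbabilityTheory Filter

/-! ### Growth of the Young function -/

/-- If the conjugate `Ψ` is of class `Δ₂`, then `Φ` satisfies the `∇₂` condition: `Φ (a x)`
eventually dominates `2 a Φ x` for some `a ≥ 2`. A subgradient `y` of `Φ` at `x` gives equality
`Φ x + Ψ y = x y`, and testing `Φ` at `a x` against the slope `2 y`, with `Ψ (2 y) ≤ 2 a Ψ y`,
yields the bound. -/
lemma nabla_two_of_conjugate_delta_two (Φ : ℝ → ℝ) (hΦ0 : Φ 0 = 0)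
    (hΦconv : ConvexOn ℝ (Set.Ici 0) Φ)
    (hyoung : Tendsto (fun x => Φ x / x) atTop atTop)
    (Ψ : ℝ → ℝ)
    (hΨ : ∀ y : ℝ, 0 ≤ y → IsLUB {z : ℝ | ∃ x : ℝ, 0 ≤ x ∧ z = x * y - Φ x} (Ψ y))
    (hΨΔ2 : ∃ L : ℝ, ∀ᶠ y in atTop, Ψ (2 * y) ≤ L * Ψ y) :
    ∃ a : ℝ, 2 ≤ a ∧ ∀ᶠ x in atTop, 2 * a * Φ x ≤ Φ (a * x) := by
  obtain ⟨L, hL⟩ := hΨΔ2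
  obtain ⟨y0, hy0⟩ := eventually_atTop.1 hL
  refine ⟨max L 4 / 2, by linarith [le_max_right L 4], ?_⟩
  set L' := max L 4 with hL'
  have hL4 : 4 ≤ L' := le_max_right _ _
  filter_upwards [eventually_gt_atTop 0, hyoung.eventually_ge_atTop (max y0 0)] with x hx hxy
  have hxi : x ∈ interior (Set.Ici (0 : ℝ)) := by simpa using hx
  set y := derivWithin Φ (Set.Ioi x) x with hy
  have hsub : ∀ t, 0 ≤ t → Φ x + y * (t - x) ≤ Φ t := by
    intro t ht
    rcases lt_trichotomy t x with h | h | h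
    · have h1 := hΦconv.slope_le_leftDeriv_of_mem_interior (y := x) (x := t) ht hxi h
      have h2 := h1.trans (hΦconv.leftDeriv_le_rightDeriv_of_mem_interior hxi)
      rw [slope_def_field, div_le_iff₀ (by linarith)] at h2
      rw [← hy] at h2
      linarith
    · simp [h]
    · have h1 := hΦconv.rightDeriv_le_slope_of_mem_interior hxi (y := t) ht h
      rw [slope_def_field, le_div_iff₀ (by linarith)] at h1
      rw [← hy] at h1
      linarith
  have hyx : Φ x / x ≤ y := by
    rw [div_le_iff₀ hx]
    have := hsub 0 le_rfl
    rw [hΦ0] at this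
    linarith
  have hyy : max y0 0 ≤ y := hxy.trans hyx
  have hyn : 0 ≤ y := (le_max_right _ _).trans hyy
  have h1 : Ψ (2 * y) ≤ L * Ψ y := hy0 y ((le_max_left _ _).trans hyy)
  have hΨnn : 0 ≤ Ψ y := (hΨ y hyn).1 ⟨0, le_rfl, by simp [hΦ0]⟩
  have h2 : Ψ (2 * y) ≤ L' * Ψ y :=
    h1.trans (mul_le_mul_of_nonneg_right (le_max_left _ _) hΨnn)
  have h3 : Ψ y ≤ x * y - Φ x := by
    refine (hΨ y hyn).2 ?_
    rintro z ⟨t, ht, rfl⟩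
    have := hsub t ht
    linarith
  have h4 : (L' / 2 * x) * (2 * y) - Φ (L' / 2 * x) ≤ Ψ (2 * y) :=
    (hΨ (2 * y) (by linarith)).1 ⟨L' / 2 * x, by positivity, rfl⟩
  have h5 : L' * Ψ y ≤ L' * (x * y - Φ x) := mul_le_mul_of_nonneg_left h3 (by linarith)
  linarith

/-- Iterating the `Δ₂` condition lets any dilation factor `c` replace `2`. -/
lemma delta_two_dilation (Φ : ℝ → ℝ)
    (hΦmono : MonotoneOn Φ (Set.Ici 0))
    (hΦnn : ∀ x : ℝ, 0 ≤ x → 0 ≤ Φ x)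
    (hΔ2 : ∃ L : ℝ, ∀ᶠ x in atTop, Φ (2 * x) ≤ L * Φ x) (c : ℝ) (hc : 0 ≤ c) :
    ∃ C : ℝ, 0 ≤ C ∧ ∀ᶠ x in atTop, Φ (c * x) ≤ C * Φ x := by
  obtain ⟨L, hL⟩ := hΔ2
  have key : ∀ n : ℕ, ∃ C : ℝ, 0 ≤ C ∧ ∀ᶠ x in atTop, Φ (2 ^ n * x) ≤ C * Φ x := by
    intro n
    induction n with
    | zero => exact ⟨1, zero_le_one, Eventually.of_forall fun x => by simp⟩
    | succ n ih =>
      obtain ⟨C, hC, h⟩ := ih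
      refine ⟨max L 0 * C, by positivity, ?_⟩
      have ht : Tendsto (fun x : ℝ => 2 ^ n * x) atTop atTop :=
        tendsto_id.const_mul_atTop (by positivity)
      filter_upwards [h, ht.eventually hL, eventually_ge_atTop 0] with x h1 h2 hx
      have h3 : 0 ≤ Φ (2 ^ n * x) := hΦnn _ (by positivity)
      calc Φ (2 ^ (n + 1) * x) = Φ (2 * (2 ^ n * x)) := by ring_nf
        _ ≤ L * Φ (2 ^ n * x) := h2
        _ ≤ max L 0 * Φ (2 ^ n * x) := mul_le_mul_of_nonneg_right (le_max_left _ _) h3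
        _ ≤ max L 0 * (C * Φ x) := mul_le_mul_of_nonneg_left h1 (le_max_right _ _)
        _ = _ := by ring
  obtain ⟨n, hn⟩ := pow_unbounded_of_one_lt c (one_lt_two)
  obtain ⟨C, hC, h⟩ := key n
  refine ⟨C, hC, ?_⟩
  filter_upwards [h, eventually_ge_atTop 0] with x h1 hx
  refine le_trans (hΦmono (Set.mem_Ici.2 (by positivity)) (Set.mem_Ici.2 (by positivity)) ?_) h1
  exact mul_le_mul_of_nonneg_right hn.le hx

/-- Along the geometric grid `x₁ aᵏ` the quotients `Φ x / x` at least double, so their sum over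
the grid points below `z` is at most twice the last one, hence at most `2 Φ z / z`. -/
lemma sum_grid_le (Φ : ℝ → ℝ) (hΦ0 : Φ 0 = 0)
    (hΦconv : ConvexOn ℝ (Set.Ici 0) Φ)
    (hΦnn : ∀ x : ℝ, 0 ≤ x → 0 ≤ Φ x) (a x₁ : ℝ) (ha : 2 ≤ a) (hx₁ : 0 < x₁)
    (h : ∀ x, x₁ ≤ x → 2 * a * Φ x ≤ Φ (a * x)) (z : ℝ) (hz : 0 ≤ z) (N : ℕ) :
    ∑ k ∈ Finset.range N, Φ (x₁ * a ^ k) / (x₁ * a ^ k) * (if x₁ * a ^ k ≤ z then z else 0)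
      ≤ 2 * Φ z := by
  set r : ℕ → ℝ := fun k => Φ (x₁ * a ^ k) / (x₁ * a ^ k) with hr
  have hpos : ∀ k, 0 < x₁ * a ^ k := fun k => by positivity
  have hrnn : ∀ k, 0 ≤ r k := fun k => div_nonneg (hΦnn _ (hpos k).le) (hpos k).le
  have hdouble : ∀ k, 2 * r k ≤ r (k + 1) := by
    intro k
    have h1 := h (x₁ * a ^ k) (le_mul_of_one_le_right hx₁.le (one_le_pow₀ (by linarith)))
    have h2 : a * (x₁ * a ^ k) = x₁ * a ^ (k + 1) := by ring
    rw [h2] at h1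
    simp only [hr]
    rw [le_div_iff₀ (hpos _)]
    refine le_trans (le_of_eq ?_) h1
    rw [← h2]
    have := (hpos k).ne'
    generalize x₁ * a ^ k = t at *
    field_simp
  have hsum : ∀ N, ∑ k ∈ Finset.range (N + 1), r k ≤ 2 * r N := by
    intro N
    induction N with
    | zero => simp; linarith [hrnn 0]
    | succ n ih =>
      rw [Finset.sum_range_succ]
      linarith [hdouble n]
  induction N with
  | zero => simpa using hΦnn z hz
  | succ n ih =>
    by_cases hzn : x₁ * a ^ n ≤ z
    · have hz0 : 0 < z := (hpos n).trans_le hzn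
      have h1 : ∑ k ∈ Finset.range (n + 1), r k * (if x₁ * a ^ k ≤ z then z else 0)
          ≤ ∑ k ∈ Finset.range (n + 1), r k * z := by
        refine Finset.sum_le_sum fun k _ => mul_le_mul_of_nonneg_left ?_ (hrnn k)
        split_ifs <;> linarith
      rw [← Finset.sum_mul] at h1
      have h2 := hΦconv.secant_mono (a := 0) (x := x₁ * a ^ n) (y := z) Set.self_mem_Ici
        (hpos n).le hz (hpos n).ne' hz0.ne' hzn
      simp only [hΦ0, sub_zero] at h2
      rw [le_div_iff₀ hz0] at h2
      have h3 := mul_le_mul_of_nonneg_right (hsum n) hz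
      simp only [hr] at h1 h3 ⊢
      linarith
    · rw [Finset.sum_range_succ, if_neg hzn]
      simpa using ih

/-! ### The maximal inequality -/

/-- Doob's maximal inequality in self-improved form. Doob gives
`2x · P(sup Z > 2x) ≤ E[W; sup Z > 2x]`, and the part of the right-hand side where `W < x` is at
most `x · P(sup Z > 2x)`, which is absorbed on the left. -/
lemma maximal_ineq_truncated {Ω : Type*} {m0 : MeasurableSpace Ω} (μ : Measure Ω)
    [IsProbabilityMeasure μ] (ℱ : Filtration ℕ m0) (Z : ℕ → Ω → ℝ)
    (hsub : Submartingale Z ℱ μ) (hnn : 0 ≤ Z) (W : Ω → ℝ) (hWm : Measurable W) (hW0 : 0 ≤ W)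
    (hWi : Integrable W μ)
    (hZW : ∀ n s, MeasurableSet[ℱ n] s → ∫ ω in s, Z n ω ∂μ ≤ ∫ ω in s, W ω ∂μ)
    (x : ℝ) (hx : 0 < x) :
    ENNReal.ofReal x * μ {ω | ∃ n, 2 * x < Z n ω} ≤
      ∫⁻ ω, ENNReal.ofReal (if x ≤ W ω then W ω else 0) ∂μ := by
  set A : ℕ → Set Ω := fun n =>
    {ω | ((2 * x).toNNReal : ℝ) ≤
      (Finset.range (n + 1)).sup' Finset.nonempty_range_add_one fun k => Z k ω} with hA
  have h2x : ((2 * x).toNNReal : ℝ) = 2 * x := Real.coe_toNNReal _ (by linarith)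
  have hAmono : Monotone A := by
    intro m n hmn ω hω
    simp only [hA, Set.mem_ofPred_eq] at hω ⊢
    exact hω.trans (Finset.sup'_mono _ (Finset.range_mono (by omega)) _)
  have hsubset : {ω | ∃ n, 2 * x < Z n ω} ⊆ ⋃ n, A n := by
    rintro ω ⟨n, hn⟩
    refine Set.mem_iUnion.2 ⟨n, ?_⟩
    simp only [hA, Set.mem_ofPred_eq, h2x]
    exact hn.le.trans (Finset.le_sup' (fun k => Z k ω) (Finset.self_mem_range_succ n))
  have hAmeas : ∀ n, MeasurableSet[ℱ n] (A n) := by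
    intro n
    have : Measurable[ℱ n] fun ω =>
        (Finset.range (n + 1)).sup' Finset.nonempty_range_add_one fun k => Z k ω :=
      @Finset.measurable_range_sup'' _ _ _ (ℱ n) _ _ _ _ fun k hk =>
        ((hsub.stronglyAdapted k).mono (ℱ.mono hk)).measurable
    exact this measurableSet_Ici
  set V : Ω → ℝ := fun ω => if x ≤ W ω then W ω else 0 with hV
  have hVm : Measurable V := Measurable.ite (measurableSet_le measurable_const hWm) hWm
    measurable_const
  have hV0 : 0 ≤ V := fun ω => by
    simp only [hV, Pi.zero_apply]; split_ifs; exacts [hW0 ω, le_rfl]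
  have hVi : Integrable V μ := by
    refine hWi.mono hVm.aestronglyMeasurable (Eventually.of_forall fun ω => ?_)
    simp only [hV]; split_ifs
    · exact le_rfl
    · simp
  have hbound : ∀ n, ENNReal.ofReal x * μ (A n) ≤ ∫⁻ ω, ENNReal.ofReal (V ω) ∂μ := by
    intro n
    have h1 := maximal_ineq hsub hnn (ε := (2 * x).toNNReal) n
    change ((2 * x).toNNReal : ENNReal) * μ (A n) ≤ ENNReal.ofReal (∫ ω in A n, Z n ω ∂μ) at h1
    have h2 := h1.trans (ENNReal.ofReal_le_ofReal (hZW n _ (hAmeas n)))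
    have hAm : MeasurableSet (A n) := ℱ.le n _ (hAmeas n)
    have h3 : ∫ ω in A n, W ω ∂μ ≤ x * μ.real (A n) + ∫ ω, V ω ∂μ := by
      have : ∫ ω in A n, W ω ∂μ ≤ ∫ ω in A n, (x + V ω) ∂μ := by
        refine integral_mono hWi.integrableOn
          ((integrable_const x).add hVi.integrableOn) fun ω => ?_
        simp only [hV]; split_ifs <;> linarith
      rw [integral_add (integrable_const x) hVi.integrableOn] at this
      simp only [integral_const, measureReal_restrict_apply_univ, smul_eq_mul] at this
      have h4 := setIntegral_le_integral (s := A n) hVi (Eventually.of_forall hV0)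
      linarith
    rw [← ofReal_integral_eq_lintegral_ofReal hVi (Eventually.of_forall hV0)]
    rw [← ofReal_measureReal, ← ENNReal.ofReal_mul hx.le]
    rw [← ofReal_measureReal, ← ENNReal.ofReal, ← ENNReal.ofReal_mul (by linarith),
      ENNReal.ofReal_le_ofReal_iff (integral_nonneg hW0)] at h2
    exact ENNReal.ofReal_le_ofReal (by linarith)
  calc ENNReal.ofReal x * μ {ω | ∃ n, 2 * x < Z n ω}
      ≤ ENNReal.ofReal x * μ (⋃ n, A n) := by gcongr
    _ = ⨆ n, ENNReal.ofReal x * μ (A n) := by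
        rw [hAmono.measure_iUnion, ENNReal.mul_iSup]
    _ ≤ _ := iSup_le hbound

/-! ### Conclusion -/

/-- The maximal inequality summed over the geometric grid: the series controlling
`E Φ (sup Z)` is bounded by `2 E Φ (W)`. -/
lemma tsum_grid_le {Ω : Type*} {m0 : MeasurableSpace Ω} (μ : Measure Ω)
    [IsProbabilityMeasure μ] (Φ : ℝ → ℝ) (hΦ0 : Φ 0 = 0)
    (hΦconv : ConvexOn ℝ (Set.Ici 0) Φ)
    (hΦnn : ∀ x : ℝ, 0 ≤ x → 0 ≤ Φ x) (a x₁ : ℝ) (ha : 2 ≤ a) (hx₁ : 0 < x₁)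
    (h : ∀ x, x₁ ≤ x → 2 * a * Φ x ≤ Φ (a * x))
    (ℱ : Filtration ℕ m0) (Z : ℕ → Ω → ℝ)
    (hsub : Submartingale Z ℱ μ) (hnn : 0 ≤ Z) (W : Ω → ℝ) (hWm : Measurable W) (hW0 : 0 ≤ W)
    (hWi : Integrable W μ)
    (hZW : ∀ n s, MeasurableSet[ℱ n] s → ∫ ω in s, Z n ω ∂μ ≤ ∫ ω in s, W ω ∂μ) :
    ∑' k : ℕ, ENNReal.ofReal (Φ (x₁ * a ^ k)) * μ {ω | ∃ n, 2 * (x₁ * a ^ k) < Z n ω} ≤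
      ∫⁻ ω, ENNReal.ofReal (2 * Φ (W ω)) ∂μ := by
  have hpos : ∀ k : ℕ, 0 < x₁ * a ^ k := fun k => by positivity
  have hrnn : ∀ k : ℕ, 0 ≤ Φ (x₁ * a ^ k) / (x₁ * a ^ k) :=
    fun k => div_nonneg (hΦnn _ (hpos k).le) (hpos k).le
  have hVm : ∀ k : ℕ, Measurable fun ω => if x₁ * a ^ k ≤ W ω then W ω else 0 := fun k =>
    Measurable.ite (measurableSet_le measurable_const hWm) hWm measurable_const
  calc _ ≤ ∑' k : ℕ, ∫⁻ ω, ENNReal.ofReal (Φ (x₁ * a ^ k) / (x₁ * a ^ k) *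
          (if x₁ * a ^ k ≤ W ω then W ω else 0)) ∂μ := by
        refine ENNReal.tsum_le_tsum fun k => ?_
        have h1 := maximal_ineq_truncated μ ℱ Z hsub hnn W hWm hW0 hWi hZW _ (hpos k)
        simp_rw [ENNReal.ofReal_mul (hrnn k)]
        rw [lintegral_const_mul _ (hVm k).ennreal_ofReal]
        refine le_trans (le_of_eq ?_) (mul_le_mul_right h1 _)
        rw [← mul_assoc (ENNReal.ofReal _), ← ENNReal.ofReal_mul (hrnn k), div_mul_cancel₀ _ (hpos k).ne']
    _ = ∫⁻ ω, ∑' k : ℕ, ENNReal.ofReal (Φ (x₁ * a ^ k) / (x₁ * a ^ k) *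
          (if x₁ * a ^ k ≤ W ω then W ω else 0)) ∂μ :=
        (lintegral_tsum fun k => ((hVm k).const_mul _).ennreal_ofReal.aemeasurable).symm
    _ ≤ _ := by
        refine lintegral_mono fun ω => ENNReal.tsum_le_of_sum_range_le fun N => ?_
        rw [← ENNReal.ofReal_sum_of_nonneg]
        · exact ENNReal.ofReal_le_ofReal
            (sum_grid_le Φ hΦ0 hΦconv hΦnn a x₁ ha hx₁ h (W ω) (hW0 ω) N)
        · intro k _
          refine mul_nonneg (hrnn k) ?_
          split_ifs
          exacts [hW0 ω, le_rfl]

theorem stmt17 {Ω : Type*} {m0 : MeasurableSpace Ω} (μ : Measure Ω) [IsProbabilityMeasure μ]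
    (Φ : ℝ → ℝ) (hΦ0 : Φ 0 = 0)
    (hΦconv : ConvexOn ℝ (Set.Ici 0) Φ)
    (hΦmono : MonotoneOn Φ (Set.Ici 0))
    (hΦnn : ∀ x : ℝ, 0 ≤ x → 0 ≤ Φ x)
    (hyoung : Tendsto (fun x => Φ x / x) atTop atTop)
    (hΔ2 : ∃ L : ℝ, ∀ᶠ x in atTop, Φ (2 * x) ≤ L * Φ x)
    (Ψ : ℝ → ℝ)
    (hΨ : ∀ y : ℝ, 0 ≤ y → IsLUB {z : ℝ | ∃ x : ℝ, 0 ≤ x ∧ z = x * y - Φ x} (Ψ y))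
    (hΨΔ2 : ∃ L : ℝ, ∀ᶠ y in atTop, Ψ (2 * y) ≤ L * Ψ y)
    (ℱ : Filtration ℕ m0) (Z : ℕ → Ω → ℝ)
    (hsub : Submartingale Z ℱ μ)
    (hnn : ∀ n, 0 ≤ᵐ[μ] Z n)
    (Zinf : Ω → ℝ)
    (has : ∀ᵐ ω ∂μ, Tendsto (fun n => Z n ω) atTop (nhds (Zinf ω)))
    (hL1 : Tendsto (fun n => eLpNorm (Z n - Zinf) 1 μ) atTop (nhds 0))
    (hΦZ : Integrable (fun ω => Φ (Zinf ω)) μ) :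
    (∀ᵐ ω ∂μ, BddAbove (Set.range fun n => Z n ω)) ∧
    ∀ Δ : ℝ, 0 < Δ → ∫⁻ ω, ENNReal.ofReal (Φ (Δ * ⨆ n, Z n ω)) ∂μ < ⊤ := by
  have hnn' : ∀ᵐ ω ∂μ, ∀ n, 0 ≤ Z n ω := ae_all_iff.2 hnn
  have hbdd : ∀ᵐ ω ∂μ, BddAbove (Set.range fun n => Z n ω) := by
    filter_upwards [has] with ω hω using hω.bddAbove_range
  refine ⟨hbdd, fun Δ hΔ => ?_⟩
  have hZinfm : AEMeasurable Zinf μ :=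
    aemeasurable_of_tendsto_metrizable_ae' (fun n => (hsub.integrable n).1.aemeasurable) has
  have hZinf0 : ∀ᵐ ω ∂μ, 0 ≤ Zinf ω := by
    filter_upwards [has, hnn'] with ω h1 h2 using ge_of_tendsto' h1 h2
  have hZinfi : Integrable Zinf μ := by
    obtain ⟨n, hn⟩ := (hL1.eventually_lt_const (zero_lt_one)).exists
    have h1 : Integrable (Z n - Zinf) μ := memLp_one_iff_integrable.1
      ⟨(hsub.integrable n).1.sub hZinfm.aestronglyMeasurable, hn.trans ENNReal.one_lt_top⟩
    simpa using (hsub.integrable n).sub h1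
  -- Everywhere non-negative modifications of the process and of a measurable version of its limit.
  set Y : ℕ → Ω → ℝ := fun n => (Z n)⁺ with hY
  have hYsub : Submartingale Y ℱ μ := hsub.pos
  have hY0 : 0 ≤ Y := fun n ω => by simp [hY]
  have hYZ : ∀ᵐ ω ∂μ, ∀ n, Y n ω = Z n ω := by
    filter_upwards [hnn'] with ω hω n
    simp [hY, hω n]
  set W : Ω → ℝ := fun ω => max (hZinfm.mk Zinf ω) 0 with hW
  have hWm : Measurable W := hZinfm.measurable_mk.max measurable_const
  have hW0 : 0 ≤ W := fun ω => le_max_right _ _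
  have hWZ : W =ᵐ[μ] Zinf := by
    filter_upwards [hZinfm.ae_eq_mk, hZinf0] with ω h1 h2
    simp only [hW, ← h1, max_eq_left h2]
  have hWi : Integrable W μ := hZinfi.congr hWZ.symm
  have hYW : ∀ n s, MeasurableSet[ℱ n] s → ∫ ω in s, Y n ω ∂μ ≤ ∫ ω in s, W ω ∂μ := by
    intro n s hs
    have h1 : ∫ ω in s, Y n ω ∂μ = ∫ ω in s, Z n ω ∂μ :=
      integral_congr_ae (ae_restrict_of_ae (hYZ.mono fun ω h => h n))
    have h2 : ∫ ω in s, W ω ∂μ = ∫ ω in s, Zinf ω ∂μ := integral_congr_ae (ae_restrict_of_ae hWZ)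
    rw [h1, h2]
    refine ge_of_tendsto (tendsto_setIntegral_of_L1' Zinf hZinfi.1
      (Eventually.of_forall hsub.integrable) hL1 s) ?_
    filter_upwards [eventually_ge_atTop n] with m hm using hsub.setIntegral_le hm hs
  obtain ⟨a, ha, hgrow⟩ :=
    nabla_two_of_conjugate_delta_two Φ hΦ0 hΦconv hyoung Ψ hΨ hΨΔ2
  -- The factor `a` passes from one grid point to the next. Cutting at `4 x₁ aᵏ ≤ M` leaves
  -- room for the strict inequality `2 x₁ aᵏ < M`, which some `Y n` then inherits.
  obtain ⟨C, hC, hdil⟩ := delta_two_dilation Φ hΦmono hΦnn hΔ2 (4 * a * Δ) (by positivity)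
  obtain ⟨x₀, hx₀⟩ := eventually_atTop.1 (hgrow.and hdil)
  set x₁ := max x₀ 1 with hx₁def
  have hx₁ : 0 < x₁ := lt_of_lt_of_le one_pos (le_max_right _ _)
  have hge : ∀ x, x₁ ≤ x → x₀ ≤ x := fun x hx => (le_max_left _ _).trans hx
  set E : ℕ → Set Ω := fun k => {ω | ∃ n, 2 * (x₁ * a ^ k) < Y n ω} with hE
  have hEm : ∀ k, MeasurableSet (E k) := by
    intro k
    simp only [hE, Set.ofPred_exists]
    exact MeasurableSet.iUnion fun n => measurableSet_lt measurable_const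
      ((hYsub.stronglyMeasurable n).measurable.mono (ℱ.le n) le_rfl)
  have hseries := tsum_grid_le μ Φ hΦ0 hΦconv hΦnn a x₁ ha hx₁ (fun x hx => (hx₀ x (hge x hx)).1)
    ℱ Y hYsub hY0 W hWm hW0 hWi hYW
  have hfin : ∫⁻ ω, ENNReal.ofReal (2 * Φ (W ω)) ∂μ < ⊤ := by
    have h1 : Integrable (fun ω => 2 * Φ (W ω)) μ :=
      (hΦZ.congr (hWZ.mono fun ω h => by simp only [h])).const_mul 2
    exact h1.lintegral_lt_top
  have hpt : ∀ᵐ ω ∂μ, ENNReal.ofReal (Φ (Δ * ⨆ n, Z n ω)) ≤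
      ENNReal.ofReal (Φ (Δ * (4 * x₁))) +
        ∑' k, ENNReal.ofReal (C * Φ (x₁ * a ^ k)) * (E k).indicator 1 ω := by
    filter_upwards [hnn', hYZ, hbdd] with ω h0 h1 hb
    set M := ⨆ n, Z n ω with hM
    have hM0 : 0 ≤ M := (h0 0).trans (le_ciSup hb 0)
    rcases le_or_gt M (4 * x₁) with hle | hlt
    · refine le_add_right (ENNReal.ofReal_le_ofReal (hΦmono ?_ ?_ ?_))
      · exact Set.mem_Ici.2 (by positivity)
      · exact Set.mem_Ici.2 (by positivity)
      · exact mul_le_mul_of_nonneg_left hle hΔ.le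
    · obtain ⟨k, hk1, hk2⟩ := exists_nat_pow_near (x := M / (4 * x₁)) (y := a)
        ((one_le_div (by positivity)).2 hlt.le) (by linarith)
      rw [le_div_iff₀ (by positivity)] at hk1
      rw [div_lt_iff₀ (by positivity)] at hk2
      have hxk : 0 < x₁ * a ^ k := by positivity
      refine le_add_left (le_trans ?_ (ENNReal.le_tsum k))
      have hωE : ω ∈ E k := by
        have : 2 * (x₁ * a ^ k) < M := by linarith
        obtain ⟨n, hn⟩ := exists_lt_of_lt_ciSup this
        exact ⟨n, by rw [h1 n]; exact hn⟩
      rw [Set.indicator_of_mem hωE, Pi.one_apply, mul_one]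
      refine ENNReal.ofReal_le_ofReal (le_trans ?_ (hx₀ (x₁ * a ^ k) (hge _
        (le_mul_of_one_le_right hx₁.le (one_le_pow₀ (by linarith))))).2)
      refine hΦmono (Set.mem_Ici.2 (by positivity)) (Set.mem_Ici.2 (by positivity)) ?_
      have h3 := mul_le_mul_of_nonneg_left hk2.le hΔ.le
      refine h3.trans (le_of_eq ?_)
      ring
  refine lt_of_le_of_lt (lintegral_mono_ae hpt) ?_
  rw [lintegral_add_left measurable_const, lintegral_const, measure_univ, mul_one]
  refine ENNReal.add_lt_top.2 ⟨ENNReal.ofReal_lt_top, ?_⟩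
  rw [lintegral_tsum fun k =>
    ((measurable_one.indicator (hEm k)).const_mul _).aemeasurable]
  have hterm : ∀ k, ∫⁻ ω, ENNReal.ofReal (C * Φ (x₁ * a ^ k)) * (E k).indicator 1 ω ∂μ =
      ENNReal.ofReal C * (ENNReal.ofReal (Φ (x₁ * a ^ k)) * μ (E k)) := by
    intro k
    rw [lintegral_const_mul _ (measurable_one.indicator (hEm k)), lintegral_indicator_one (hEm k),
      ENNReal.ofReal_mul hC, mul_assoc]
  simp_rw [hterm]
  rw [ENNReal.tsum_mul_left]
  exact ENNReal.mul_lt_top ENNReal.ofReal_lt_top (hseries.trans_lt hfin)
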